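/- arXiv:2009.12086 — 2 statements merged into one kernel-verified Lean document; each statement's English description precedes it below -/
import Mathlib

section
/- Fix θ > 0 and let p(s,x,y) = (2π(1−e^{−2θs}))^{−1/2} exp(−(x − y e^{−θs})²/(2(1−e^{−2θs}))) be the Ornstein–Uhlenbeck (Mehler) transition kernel. Let f be a probability density on (0,∞), set 𝔢(λ) = ∫₀^∞ e^{−λs} f(s) ds for λ ≥ 0, and assume sup_{λ≥0} λ·𝔢(λ) < ∞. Then for every x, y ∈ ℝ, ∫₀^∞ p(s,x,y) f(s) ds = m(x) · Σ_{n=0}^∞ 𝔢(θn) Q_n(x) Q_n(y), where the series converges absolutely. -/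
open MeasureTheory Set Polynomial

/-- The Ornstein–Uhlenbeck (Mehler) transition kernel
`p(s,x,y) = (2π(1−e^{−2θs}))^{−1/2} exp(−(x − y e^{−θs})²/(2(1−e^{−2θs})))`. -/
noncomputable def ouKernel (θ s x y : ℝ) : ℝ :=
  (Real.sqrt (2 * Real.pi * (1 - Real.exp (-2 * θ * s))))⁻¹ *
    Real.exp (-(x - y * Real.exp (-θ * s)) ^ 2 / (2 * (1 - Real.exp (-2 * θ * s))))

/-- The standard Gaussian density `m(x) = (2π)^{−1/2} e^{−x²/2}`. -/
noncomputable def gauss (x : ℝ) : ℝ :=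
  (Real.sqrt (2 * Real.pi))⁻¹ * Real.exp (-x ^ 2 / 2)

/-- The normalized probabilists' Hermite polynomials `Qₙ(x) = Heₙ(x)/√(n!)`. -/
noncomputable def normHermite (n : ℕ) (x : ℝ) : ℝ :=
  (Polynomial.aeval x (Polynomial.hermite n)) / Real.sqrt (Nat.factorial n)

/-!
If `Z`, `W` are independent standard Gaussians, then `Heₙ(x) = E (x + iZ)ⁿ`: both sides satisfy the
same three-term recurrence, by Stein's identity. Hence `∑ rⁿ Qₙ(x) Qₙ(y)` is the Gaussian integral
`E exp (r (x + iZ)(y + iW))`, whose evaluation is Mehler's formula; at `r = e^{-θs}` this is the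
Ornstein–Uhlenbeck kernel divided by `m(x)`.

Integrating against `f` term by term needs a dominating function. By AM-GM the absolute series is at
most the mean of the two diagonal Mehler sums at `x` and `y`, which grow like `s^{-1/2}` as `s → 0`;
and `∫ s^{-a} f(s) ds = Γ(a)⁻¹ ∫ λ^{a-1} 𝔢(λ) dλ` is finite for `0 < a < 1` because `𝔢(λ) = O(1/λ)`.
-/

section GaussianIntegrals

open ProbabilityTheory
open scoped NNReal

lemma hasDerivAt_gaussianPDFReal (m : ℝ) {v : ℝ≥0} (hv : v ≠ 0) (z : ℝ) :
    HasDerivAt (gaussianPDFReal m v) (-((z - m) / v) * gaussianPDFReal m v z) z := by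
  have hexp := ((((hasDerivAt_id z).sub_const m).pow 2).neg.div_const (2 * v : ℝ)).exp
  refine (hexp.const_mul (√(2 * Real.pi * v))⁻¹).congr_deriv ?_
  simp only [gaussianPDFReal, id_eq]
  field_simp
  simp only [Pi.neg_apply, Pi.pow_apply, neg_div, Nat.cast_ofNat, Nat.add_one_sub_one, pow_one,
    neg_inj]
  ring

lemma integrable_gaussianReal_iff {E : Type*} [NormedAddCommGroup E] [NormedSpace ℝ E]
    {m : ℝ} {v : ℝ≥0} (hv : v ≠ 0) {g : ℝ → E} :
    Integrable g (gaussianReal m v) ↔ Integrable fun z => gaussianPDFReal m v z • g z := by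
  rw [gaussianReal_of_var_ne_zero m hv, integrable_withDensity_iff_integrable_smul'
    (measurable_gaussianPDF m v) (ae_of_all _ fun _ => gaussianPDF_lt_top)]
  simp only [toReal_gaussianPDF]

lemma integral_sub_smul_gaussianReal {E : Type*} [NormedAddCommGroup E] [NormedSpace ℝ E]
    {m : ℝ} {v : ℝ≥0} (hv : v ≠ 0) {g g' : ℝ → E} (hderiv : ∀ z, HasDerivAt g (g' z) z)
    (hg : Integrable g (gaussianReal m v)) (hg' : Integrable g' (gaussianReal m v))
    (hmul : Integrable (fun z => (z - m) • g z) (gaussianReal m v)) :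
    ∫ z, (z - m) • g z ∂gaussianReal m v = (v : ℝ) • ∫ z, g' z ∂gaussianReal m v := by
  have hv' : (v : ℝ) ≠ 0 := mod_cast hv
  have hprod (z : ℝ) : HasDerivAt (fun z => gaussianPDFReal m v z • g z)
      (gaussianPDFReal m v z • (g' z - (v : ℝ)⁻¹ • (z - m) • g z)) z := by
    refine ((hasDerivAt_gaussianPDFReal m hv z).smul (hderiv z)).congr_deriv ?_
    module
  have hzero := integral_eq_zero_of_hasDerivAt_of_integrable hprod
    ((integrable_gaussianReal_iff hv).1 (hg'.sub (hmul.smul (v : ℝ)⁻¹)))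
    ((integrable_gaussianReal_iff hv).1 hg)
  rw [← integral_gaussianReal_eq_integral_smul hv,
    integral_sub hg' (by exact hmul.smul (v : ℝ)⁻¹), integral_smul, sub_eq_zero] at hzero
  rw [hzero, smul_inv_smul₀ hv']

lemma gaussianPDFReal_smul_cexp_quadratic (a : ℝ) (b c : ℂ) (z : ℝ) :
    gaussianPDFReal 0 1 z • Complex.exp (a * z ^ 2 + b * z + c) =
      ((√(2 * Real.pi))⁻¹ : ℝ) * Complex.exp (((a - 1 / 2 : ℝ) : ℂ) * z ^ 2 + b * z + c) := by
  simp only [gaussianPDFReal, Complex.real_smul, Complex.ofReal_mul, mul_assoc,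
    Complex.ofReal_exp, ← Complex.exp_add]
  push_cast
  congr 2
  · simp
  · ring_nf

lemma integrable_cexp_quadratic_gaussianReal {a : ℝ} (ha : a < 1 / 2) (b c : ℂ) :
    Integrable (fun z : ℝ => Complex.exp (a * z ^ 2 + b * z + c)) (gaussianReal 0 1) := by
  rw [integrable_gaussianReal_iff one_ne_zero]
  simp_rw [gaussianPDFReal_smul_cexp_quadratic]
  refine (integrable_cexp_quadratic' ?_ b c).const_mul _
  rw [Complex.ofReal_re]
  linarith

lemma integral_cexp_quadratic_gaussianReal {a : ℝ} (ha : a < 1 / 2) (b c : ℂ) :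
    ∫ z : ℝ, Complex.exp (a * z ^ 2 + b * z + c) ∂gaussianReal 0 1 =
      ((√(1 - 2 * a))⁻¹ : ℝ) * Complex.exp (c + b ^ 2 / (2 * (1 - 2 * a))) := by
  have hpos : 0 < 1 - 2 * a := by linarith
  have hsqrt : ((Real.pi : ℂ) / -((a - 1 / 2 : ℝ) : ℂ)) ^ (1 / 2 : ℂ) =
      (√(2 * Real.pi) * (√(1 - 2 * a))⁻¹ : ℝ) := by
    have hbase : (Real.pi : ℂ) / -((a - 1 / 2 : ℝ) : ℂ) =
        (2 * Real.pi * (1 - 2 * a)⁻¹ : ℝ) := by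
      have : (-((a - 1 / 2 : ℝ) : ℂ)) = (1 - 2 * a : ℂ) / 2 := by push_cast; ring
      rw [this]
      push_cast
      field_simp
    rw [hbase, ← Real.sqrt_inv, ← Real.sqrt_mul (by positivity), Real.sqrt_eq_rpow,
      Complex.ofReal_cpow (by positivity)]
    simp
  have hexponent : c - b ^ 2 / (4 * ((a - 1 / 2 : ℝ) : ℂ)) =
      c + b ^ 2 / (2 * (1 - 2 * a)) := by
    have : (4 * ((a - 1 / 2 : ℝ) : ℂ)) = -(2 * (1 - 2 * a : ℂ)) := by push_cast; ring
    rw [this, div_neg, sub_neg_eq_add]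
  rw [integral_gaussianReal_eq_integral_smul one_ne_zero]
  simp_rw [gaussianPDFReal_smul_cexp_quadratic]
  rw [integral_const_mul, integral_cexp_quadratic (by rw [Complex.ofReal_re]; linarith),
    hsqrt, hexponent, ← mul_assoc, ← Complex.ofReal_mul,
    inv_mul_cancel_left₀ (by positivity)]

end GaussianIntegrals

section Hermite

open ProbabilityTheory

lemma derivative_hermite_succ (n : ℕ) :
    derivative (hermite (n + 1)) = (n + 1 : ℤ[X]) * hermite n := by
  induction n with
  | zero => simp
  | succ n ih =>
    rw [hermite_succ (n + 1), derivative_sub, derivative_mul, ih, derivative_mul, hermite_succ n]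
    simp only [derivative_X, derivative_add, derivative_natCast, derivative_one]
    push_cast
    ring

lemma hermite_add_two (n : ℕ) :
    hermite (n + 2) = X * hermite (n + 1) - (n + 1 : ℤ[X]) * hermite n := by
  rw [hermite_succ (n + 1), derivative_hermite_succ]

lemma integrable_add_mul_I_pow_gaussianReal (x : ℂ) (n : ℕ) :
    Integrable (fun z : ℝ => (x + z * Complex.I) ^ n) (gaussianReal 0 1) := by
  have hid : MemLp (fun z : ℝ => (z : ℂ)) n (gaussianReal 0 1) :=
    (memLp_id_gaussianReal n).ofReal
  have hlin : MemLp (fun z : ℝ => x + z * Complex.I) n (gaussianReal 0 1) :=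
    (memLp_const x).add (hid.mul_const Complex.I)
  refine hlin.integrable_norm_pow'.congr' (by fun_prop) (ae_of_all _ fun z => ?_)
  simp

lemma integral_add_mul_I_pow_succ (x : ℂ) (n : ℕ) :
    ∫ z : ℝ, (x + z * Complex.I) ^ (n + 1) ∂gaussianReal 0 1 =
      x * ∫ z : ℝ, (x + z * Complex.I) ^ n ∂gaussianReal 0 1 -
        n * ∫ z : ℝ, (x + z * Complex.I) ^ (n - 1) ∂gaussianReal 0 1 := by
  have hint (k : ℕ) := integrable_add_mul_I_pow_gaussianReal x k
  have hderiv (z : ℝ) : HasDerivAt (fun z : ℝ => (x + z * Complex.I) ^ n)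
      (n * Complex.I * (x + z * Complex.I) ^ (n - 1)) z := by
    refine (((Complex.ofRealCLM.hasDerivAt.mul_const Complex.I).const_add x).pow n).congr_deriv ?_
    simp only [Complex.ofRealCLM_apply, Complex.ofReal_one]
    ring
  have hmul (z : ℝ) : (z - 0) • (x + z * Complex.I) ^ n =
      -Complex.I * ((x + z * Complex.I) ^ (n + 1) - x * (x + z * Complex.I) ^ n) := by
    rw [sub_zero, Complex.real_smul]
    linear_combination (z * (x + z * Complex.I) ^ n) * Complex.I_sq
  have hdiff := (hint (n + 1)).sub ((hint n).const_mul x)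
  have hstein := integral_sub_smul_gaussianReal (m := 0) (v := 1) one_ne_zero hderiv (hint _)
    ((hint (n - 1)).const_mul _) (by simp_rw [hmul]; exact hdiff.const_mul _)
  simp_rw [hmul, integral_const_mul, mul_comm (n : ℂ) Complex.I, mul_assoc] at hstein
  rw [integral_sub (hint _) ((hint _).const_mul x), integral_const_mul, NNReal.coe_one,
    one_smul, neg_mul, ← mul_neg] at hstein
  have := mul_left_cancel₀ Complex.I_ne_zero hstein
  linear_combination -this

theorem integral_add_mul_I_pow_gaussianReal (x : ℂ) (n : ℕ) :
    ∫ z : ℝ, (x + z * Complex.I) ^ n ∂gaussianReal 0 1 = aeval x (hermite n) := by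
  induction n using Nat.twoStepInduction with
  | zero => simp
  | one => simpa using integral_add_mul_I_pow_succ x 0
  | more n ih₀ ih₁ =>
    rw [integral_add_mul_I_pow_succ, Nat.add_sub_cancel, ih₀, ih₁, hermite_add_two]
    simp

end Hermite

section Mehler

open ProbabilityTheory

/-- The Mehler kernel `∑ n, rⁿ Qₙ(x) Qₙ(y)` in closed form, for `|r| < 1`. -/
noncomputable def mehlerKernel (r x y : ℝ) : ℝ :=
  (√(1 - r ^ 2))⁻¹ *
    Real.exp ((2 * r * x * y - r ^ 2 * x ^ 2 - r ^ 2 * y ^ 2) / (2 * (1 - r ^ 2)))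

variable {r : ℝ}

lemma norm_sq_add_mul_I (x z : ℝ) : ‖(x + z * Complex.I : ℂ)‖ ^ 2 = x ^ 2 + z ^ 2 := by
  rw [← Complex.normSq_eq_norm_sq, Complex.normSq_add_mul_I]

lemma integrable_exp_mul_norm_mul_norm (hr : r < 1) (h0 : 0 ≤ r) (x y : ℝ) :
    Integrable (fun p : ℝ × ℝ =>
        Real.exp (r * (‖(x + p.1 * Complex.I : ℂ)‖ * ‖(y + p.2 * Complex.I : ℂ)‖)))
      ((gaussianReal 0 1).prod (gaussianReal 0 1)) := by
  have hfactor (c : ℝ) := integrable_cexp_quadratic_gaussianReal (a := r / 2) (by linarith)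
    0 (r * c ^ 2 / 2 : ℝ)
  have hreal (c t : ℝ) : ((r / 2 : ℝ) : ℂ) * t ^ 2 + 0 * t + (r * c ^ 2 / 2 : ℝ) =
      (r / 2 * t ^ 2 + r * c ^ 2 / 2 : ℝ) := by
    push_cast
    ring
  simp_rw [hreal] at hfactor
  refine ((hfactor x).mul_prod (hfactor y)).mono (by fun_prop) (ae_of_all _ fun p => ?_)
  have hamgm : ‖(x + p.1 * Complex.I : ℂ)‖ * ‖(y + p.2 * Complex.I : ℂ)‖ ≤
      (x ^ 2 + p.1 ^ 2 + (y ^ 2 + p.2 ^ 2)) / 2 := by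
    rw [← norm_sq_add_mul_I, ← norm_sq_add_mul_I]
    linarith [two_mul_le_add_sq ‖(x + p.1 * Complex.I : ℂ)‖ ‖(y + p.2 * Complex.I : ℂ)‖]
  rw [← Complex.exp_add, Complex.norm_exp, Real.norm_eq_abs, Real.abs_exp, Real.exp_le_exp]
  refine (mul_le_mul_of_nonneg_left hamgm h0).trans ?_
  rw [Complex.add_re, Complex.ofReal_re, Complex.ofReal_re]
  exact le_of_eq (by ring)

lemma norm_cexp_mul_le (z w : ℂ) :
    ‖Complex.exp (r * (z * w))‖ ≤ Real.exp (|r| * (‖z‖ * ‖w‖)) := by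
  refine (Complex.norm_exp_le_exp_norm _).trans_eq ?_
  rw [norm_mul, norm_mul, Complex.norm_real, Real.norm_eq_abs]

lemma integral_cexp_mul_gaussianReal (y : ℝ) (z : ℂ) :
    ∫ w : ℝ, Complex.exp (r * (z * (y + w * Complex.I))) ∂gaussianReal 0 1 =
      Complex.exp (r * z * y - (r * z) ^ 2 / 2) := by
  calc
    _ = ∫ w : ℝ, Complex.exp ((0 : ℝ) * w ^ 2 + r * z * Complex.I * w + r * z * y)
        ∂gaussianReal 0 1 := by
      congr with w
      congr 1
      push_cast
      ring
    _ = _ := by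
      rw [integral_cexp_quadratic_gaussianReal (by norm_num), mul_pow, Complex.I_sq]
      simp [sub_eq_add_neg, neg_div]

theorem integral_cexp_mul_prod_gaussianReal (hr : |r| < 1) (x y : ℝ) :
    ∫ p : ℝ × ℝ, Complex.exp (r * ((x + p.1 * Complex.I) * (y + p.2 * Complex.I)))
      ∂(gaussianReal 0 1).prod (gaussianReal 0 1) = mehlerKernel r x y := by
  have hr2 : 0 < 1 - r ^ 2 := sub_pos.2 ((sq_lt_one_iff_abs_lt_one r).2 hr)
  have hne : (1 - r ^ 2 : ℂ) ≠ 0 := mod_cast hr2.ne'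
  have hint : Integrable (fun p : ℝ × ℝ =>
      Complex.exp (r * ((x + p.1 * Complex.I) * (y + p.2 * Complex.I))))
      ((gaussianReal 0 1).prod (gaussianReal 0 1)) :=
    (integrable_exp_mul_norm_mul_norm hr (abs_nonneg r) x y).mono' (by fun_prop)
      (ae_of_all _ fun p => norm_cexp_mul_le _ _)
  have hinner (z : ℝ) :
      ∫ w : ℝ, Complex.exp (r * ((x + z * Complex.I) * (y + w * Complex.I))) ∂gaussianReal 0 1 =
        Complex.exp ((r ^ 2 / 2 : ℝ) * z ^ 2 + r * (y - r * x) * Complex.I * z +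
          (r * x * y - r ^ 2 * x ^ 2 / 2)) := by
    rw [integral_cexp_mul_gaussianReal]
    congr 1
    push_cast
    linear_combination (-(r ^ 2 * z ^ 2 / 2 : ℂ)) * Complex.I_sq
  rw [integral_prod _ hint]
  simp_rw [hinner]
  rw [integral_cexp_quadratic_gaussianReal (by linarith), mehlerKernel]
  push_cast
  congr 2
  · congr 3; ring
  · rw [mul_pow, Complex.I_sq]
    field_simp
    ring

lemma normHermite_mul_normHermite (n : ℕ) (x y : ℝ) :
    normHermite n x * normHermite n y =
      aeval x (hermite n) * aeval y (hermite n) / (n.factorial : ℝ) := by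
  rw [normHermite, normHermite, div_mul_div_comm, Real.mul_self_sqrt (by positivity)]

theorem hasSum_mehler (hr : |r| < 1) (x y : ℝ) :
    HasSum (fun n => r ^ n * (normHermite n x * normHermite n y)) (mehlerKernel r x y) := by
  have hterm (n : ℕ) : ∫ p : ℝ × ℝ,
      (r * ((x + p.1 * Complex.I) * (y + p.2 * Complex.I))) ^ n / (n.factorial : ℂ)
        ∂(gaussianReal 0 1).prod (gaussianReal 0 1) =
      (r ^ n * (normHermite n x * normHermite n y) : ℝ) := by
    have hcast (t : ℝ) : (aeval (t : ℂ) (hermite n)) = ((aeval t (hermite n) : ℝ) : ℂ) :=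
      aeval_algebraMap_apply ℂ t (hermite n)
    simp_rw [mul_pow, mul_div_right_comm]
    rw [integral_const_mul, integral_prod_mul (fun z : ℝ => (x + z * Complex.I : ℂ) ^ n)
      (fun z : ℝ => (y + z * Complex.I : ℂ) ^ n), integral_add_mul_I_pow_gaussianReal,
      integral_add_mul_I_pow_gaussianReal, hcast, hcast, normHermite_mul_normHermite]
    push_cast
    ring
  have hexp (p : ℝ × ℝ) := NormedSpace.expSeries_div_hasSum_exp
    (|r| * (‖(x + p.1 * Complex.I : ℂ)‖ * ‖(y + p.2 * Complex.I : ℂ)‖))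
  have hsum := hasSum_integral_of_dominated_convergence
    (μ := (gaussianReal 0 1).prod (gaussianReal 0 1))
    (F := fun (n : ℕ) (p : ℝ × ℝ) =>
      (r * ((x + p.1 * Complex.I) * (y + p.2 * Complex.I))) ^ n / (n.factorial : ℂ))
    (f := fun p => Complex.exp (r * ((x + p.1 * Complex.I) * (y + p.2 * Complex.I))))
    (fun n p => (|r| * (‖(x + p.1 * Complex.I : ℂ)‖ * ‖(y + p.2 * Complex.I : ℂ)‖)) ^ n /
      n.factorial)
    (fun n => by fun_prop)
    (fun n => ae_of_all _ fun p => by simp)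
    (ae_of_all _ fun p => (hexp p).summable)
    (by
      simp_rw [(hexp _).tsum_eq, ← Real.exp_eq_exp_ℝ]
      exact integrable_exp_mul_norm_mul_norm hr (abs_nonneg r) x y)
    (ae_of_all _ fun p => by
      rw [Complex.exp_eq_exp_ℂ]
      exact NormedSpace.expSeries_div_hasSum_exp _)
  simp_rw [hterm, integral_cexp_mul_prod_gaussianReal hr] at hsum
  exact Complex.hasSum_ofReal.1 hsum

lemma mehlerKernel_nonneg (r x y : ℝ) : 0 ≤ mehlerKernel r x y := by
  rw [mehlerKernel]
  positivity

lemma mehlerKernel_self_le (hr : |r| < 1) (x : ℝ) :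
    mehlerKernel r x x ≤ (√(1 - r ^ 2))⁻¹ * Real.exp (x ^ 2 / 2) := by
  have hr2 : 0 < 1 - r ^ 2 := sub_pos.2 ((sq_lt_one_iff_abs_lt_one r).2 hr)
  refine mul_le_mul_of_nonneg_left (Real.exp_le_exp.2 ?_) (by positivity)
  rw [div_le_iff₀ (by positivity)]
  linarith [mul_nonneg (sq_nonneg x) (sq_nonneg (1 - r))]

lemma abs_normHermite_mul_normHermite_le (n : ℕ) (x y : ℝ) :
    |normHermite n x * normHermite n y| ≤
      (normHermite n x * normHermite n x + normHermite n y * normHermite n y) / 2 := by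
  have hamgm := two_mul_le_add_sq |normHermite n x| |normHermite n y|
  rw [sq_abs, sq_abs] at hamgm
  rw [abs_mul]
  linarith

end Mehler

section Subordination

open Asymptotics Filter

variable {θ : ℝ}

lemma abs_exp_neg_mul_lt_one {s : ℝ} (hs : 0 < θ * s) : |Real.exp (-θ * s)| < 1 := by
  rw [Real.abs_exp, Real.exp_lt_one_iff]
  linarith

lemma ouKernel_eq_gauss_mul_mehlerKernel {s : ℝ} (hs : 0 < θ * s) (x y : ℝ) :
    ouKernel θ s x y = gauss x * mehlerKernel (Real.exp (-θ * s)) x y := by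
  have hsq : Real.exp (-2 * θ * s) = Real.exp (-θ * s) ^ 2 := by
    rw [← Real.exp_nat_mul]
    ring_nf
  have hne : 1 - Real.exp (-θ * s) ^ 2 ≠ 0 :=
    (sub_pos.2 ((sq_lt_one_iff_abs_lt_one _).2 (abs_exp_neg_mul_lt_one hs))).ne'
  rw [ouKernel, gauss, mehlerKernel, hsq, Real.sqrt_mul (by positivity), mul_inv,
    mul_mul_mul_comm, ← Real.exp_add]
  generalize Real.exp (-θ * s) = r at hne
  congr 2
  field_simp
  ring

lemma inv_sqrt_one_sub_exp_neg_le {u : ℝ} (hu : 0 < u) :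
    (√(1 - Real.exp (-u)))⁻¹ ≤ 1 + u ^ (-(1 / 2) : ℝ) := by
  have hexp : Real.exp (-u) ≤ (1 + u)⁻¹ := by
    rw [Real.exp_neg]
    gcongr
    linarith [Real.add_one_le_exp u]
  have hle : (1 + u⁻¹)⁻¹ ≤ 1 - Real.exp (-u) := by
    calc (1 + u⁻¹)⁻¹ = 1 - (1 + u)⁻¹ := by field_simp; ring
      _ ≤ 1 - Real.exp (-u) := by gcongr
  calc (√(1 - Real.exp (-u)))⁻¹ ≤ (√(1 + u⁻¹)⁻¹)⁻¹ := by gcongr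
    _ = √(1 + u⁻¹) := by rw [Real.sqrt_inv, inv_inv]
    _ ≤ 1 + √u⁻¹ := by
      refine Real.sqrt_le_iff.2 ⟨by positivity, ?_⟩
      rw [add_sq, Real.sq_sqrt (by positivity)]
      linarith [Real.sqrt_nonneg u⁻¹]
    _ = 1 + u ^ (-(1 / 2) : ℝ) := by
      rw [Real.sqrt_inv, Real.sqrt_eq_rpow, Real.rpow_neg hu.le]

/-- The Laplace transform `𝔢(lam) = ∫ exp(-lam * s) f(s) dμ(s)` of the density `f` with respect
to `μ`. -/
noncomputable def laplace (μ : Measure ℝ) (f : ℝ → ℝ) (lam : ℝ) : ℝ :=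
  ∫ s, Real.exp (-lam * s) * f s ∂μ

variable {μ : Measure ℝ} {f : ℝ → ℝ}

lemma norm_exp_neg_mul_le {lam s : ℝ} (hlam : 0 ≤ lam) (hs : 0 ≤ s) (c : ℝ) :
    ‖Real.exp (-lam * s) * c‖ ≤ ‖c‖ := by
  rw [norm_mul, Real.norm_eq_abs, Real.abs_exp]
  refine mul_le_of_le_one_left (norm_nonneg c) (Real.exp_le_one_iff.2 ?_)
  linarith [mul_nonneg hlam hs]

lemma integrable_exp_neg_mul (hμ : ∀ᵐ s ∂μ, 0 < s) (hf : Integrable f μ) {lam : ℝ}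
    (hlam : 0 ≤ lam) : Integrable (fun s => Real.exp (-lam * s) * f s) μ :=
  hf.mono (by fun_prop) (hμ.mono fun _ hs => norm_exp_neg_mul_le hlam hs.le _)

lemma norm_laplace_le (hμ : ∀ᵐ s ∂μ, 0 < s) (hf : Integrable f μ) {lam : ℝ} (hlam : 0 ≤ lam) :
    ‖laplace μ f lam‖ ≤ ∫ s, ‖f s‖ ∂μ :=
  norm_integral_le_of_norm_le hf.norm (hμ.mono fun _ hs => norm_exp_neg_mul_le hlam hs.le _)

lemma continuousOn_laplace (hμ : ∀ᵐ s ∂μ, 0 < s) (hf : Integrable f μ) :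
    ContinuousOn (laplace μ f) (Ici 0) :=
  continuousOn_of_dominated (fun _ hlam => (integrable_exp_neg_mul hμ hf hlam).1)
    (fun _ hlam => hμ.mono fun _ hs => norm_exp_neg_mul_le hlam hs.le _) hf.norm
    (ae_of_all _ fun _ => by fun_prop)

lemma integrableOn_rpow_mul_laplace (hμ : ∀ᵐ s ∂μ, 0 < s) (hf : Integrable f μ)
    {a b : ℝ} (hdecay : laplace μ f =O[atTop] fun lam => lam ^ (-b)) (ha : 0 < a) (hab : a < b) :
    IntegrableOn (fun lam => lam ^ (a - 1) * laplace μ f lam) (Ioi 0) := by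
  have hlocal : LocallyIntegrableOn (laplace μ f) (Ioi 0) :=
    ((continuousOn_laplace hμ hf).mono Ioi_subset_Ici_self).locallyIntegrableOn measurableSet_Ioi
  have hbot : laplace μ f =O[nhdsWithin 0 (Ioi 0)] fun lam => lam ^ (-0 : ℝ) := by
    refine IsBigO.of_bound (∫ s, ‖f s‖ ∂μ) ?_
    filter_upwards [self_mem_nhdsWithin] with lam hlam
    simpa using norm_laplace_le hμ hf (mem_Ioi.1 hlam).le
  exact mellin_convergent_of_isBigO_scalar hlocal hdecay hab hbot ha

lemma laplace_isBigO_rpow_neg_one (hf₀ : 0 ≤ᵐ[μ] f)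
    (hbd : ∃ C : ℝ, ∀ lam : ℝ, 0 ≤ lam → lam * laplace μ f lam ≤ C) :
    laplace μ f =O[atTop] fun lam => lam ^ (-1 : ℝ) := by
  obtain ⟨C, hC⟩ := hbd
  refine IsBigO.of_bound C ?_
  filter_upwards [eventually_gt_atTop 0] with lam hlam
  have hnonneg : 0 ≤ laplace μ f lam :=
    integral_nonneg_of_ae (hf₀.mono fun _ hs => mul_nonneg (Real.exp_pos _).le hs)
  rw [Real.rpow_neg_one, Real.norm_of_nonneg hnonneg, Real.norm_of_nonneg (by positivity),
    ← div_eq_mul_inv, le_div_iff₀ hlam, mul_comm]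
  exact hC lam hlam.le

lemma integrable_rpow_neg_mul_of_laplace_isBigO [SFinite μ] (hμ : ∀ᵐ s ∂μ, 0 < s)
    (hf : Integrable f μ) (hf₀ : 0 ≤ᵐ[μ] f)
    {a b : ℝ} (hdecay : laplace μ f =O[atTop] fun lam => lam ^ (-b)) (ha : 0 < a) (hab : a < b) :
    Integrable (fun s => s ^ (-a) * f s) μ := by
  let F (p : ℝ × ℝ) : ℝ := p.1 ^ (a - 1) * (Real.exp (-p.1 * p.2) * f p.2)
  have hmeas : AEStronglyMeasurable F ((volume.restrict (Ioi 0)).prod μ) := by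
    have hpow : Measurable fun p : ℝ × ℝ => p.1 ^ (a - 1) := measurable_fst.pow_const _
    have hexp : Measurable fun p : ℝ × ℝ => Real.exp (-p.1 * p.2) := by fun_prop
    exact hpow.aestronglyMeasurable.mul
      (hexp.aestronglyMeasurable.mul hf.aestronglyMeasurable.comp_snd)
  have hnorm (lam : ℝ) (hlam : 0 < lam) :
      ∫ s, ‖F (lam, s)‖ ∂μ = lam ^ (a - 1) * laplace μ f lam := by
    rw [laplace, ← integral_const_mul]
    refine integral_congr_ae (hf₀.mono fun s hs => Real.norm_of_nonneg ?_)
    have : 0 ≤ f s := hs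
    positivity
  have hF : Integrable F ((volume.restrict (Ioi 0)).prod μ) := by
    refine (integrable_prod_iff hmeas).2 ⟨?_, ?_⟩
    · filter_upwards [ae_restrict_mem measurableSet_Ioi] with lam hlam
      exact (integrable_exp_neg_mul hμ hf (mem_Ioi.1 hlam).le).const_mul (lam ^ (a - 1))
    · exact (integrableOn_rpow_mul_laplace hμ hf hdecay ha hab).congr_fun
        (fun lam hlam => (hnorm lam hlam).symm) measurableSet_Ioi
  have hgamma (s : ℝ) (hs : 0 < s) :
      ∫ lam in Ioi 0, F (lam, s) = Real.Gamma a * (s ^ (-a) * f s) := by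
    simp_rw [F, ← mul_assoc, integral_mul_const, neg_mul, mul_comm _ s]
    rw [Real.integral_rpow_mul_exp_neg_mul_Ioi ha hs, Real.rpow_neg hs.le,
      one_div, Real.inv_rpow hs.le]
    ring
  have := hF.integral_prod_right.congr (hμ.mono fun s hs => hgamma s hs)
  exact (integrable_const_mul_iff (Real.Gamma_pos_of_pos ha).ne'.isUnit _).1 this

lemma integrable_mehlerKernel_self_mul (hθ : 0 < θ) (hμ : ∀ᵐ s ∂μ, 0 < s) (hf : Integrable f μ)
    (hf' : Integrable (fun s => s ^ (-(1 / 2) : ℝ) * f s) μ) (x : ℝ) :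
    Integrable (fun s => mehlerKernel (Real.exp (-θ * s)) x x * f s) μ := by
  have hmeas : Measurable fun s => mehlerKernel (Real.exp (-θ * s)) x x := by
    unfold mehlerKernel
    fun_prop
  have hdom := (hf.norm.add (hf'.norm.const_mul ((2 * θ) ^ (-(1 / 2) : ℝ)))).const_mul
    (Real.exp (x ^ 2 / 2))
  refine hdom.mono' (hmeas.aestronglyMeasurable.mul hf.1) (hμ.mono fun s hs => ?_)
  have hr := abs_exp_neg_mul_lt_one (mul_pos hθ hs)
  have hsq : Real.exp (-θ * s) ^ 2 = Real.exp (-(2 * θ * s)) := by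
    rw [← Real.exp_nat_mul]
    ring_nf
  have hsqrt := inv_sqrt_one_sub_exp_neg_le (u := 2 * θ * s) (by positivity)
  calc
    ‖mehlerKernel (Real.exp (-θ * s)) x x * f s‖ =
        mehlerKernel (Real.exp (-θ * s)) x x * ‖f s‖ := by
      rw [norm_mul, Real.norm_of_nonneg (mehlerKernel_nonneg _ _ _)]
    _ ≤ (√(1 - Real.exp (-θ * s) ^ 2))⁻¹ * Real.exp (x ^ 2 / 2) * ‖f s‖ := by
      gcongr
      exact mehlerKernel_self_le hr x
    _ ≤ (1 + (2 * θ * s) ^ (-(1 / 2) : ℝ)) * Real.exp (x ^ 2 / 2) * ‖f s‖ := by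
      rw [hsq]
      gcongr
    _ = _ := by
      rw [Real.mul_rpow (by positivity) hs.le, Pi.add_apply, norm_mul,
        Real.norm_of_nonneg (Real.rpow_nonneg hs.le _)]
      ring

theorem hasSum_laplace_mul_normHermite (hθ : 0 < θ) (hμ : ∀ᵐ s ∂μ, 0 < s) (hf : Integrable f μ)
    (hf' : Integrable (fun s => s ^ (-(1 / 2) : ℝ) * f s) μ) (x y : ℝ) :
    HasSum (fun n : ℕ => laplace μ f (θ * n) * normHermite n x * normHermite n y)
      (∫ s, mehlerKernel (Real.exp (-θ * s)) x y * f s ∂μ) := by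
  have hterm (n : ℕ) : laplace μ f (θ * n) * normHermite n x * normHermite n y =
      ∫ s, Real.exp (-θ * s) ^ n * (normHermite n x * normHermite n y) * f s ∂μ := by
    rw [laplace, mul_assoc, ← integral_mul_const]
    congr with s
    rw [← Real.exp_nat_mul]
    ring_nf
  have hdiag (z : ℝ) : Integrable (fun s => mehlerKernel (Real.exp (-θ * s)) z z * ‖f s‖) μ := by
    refine (integrable_mehlerKernel_self_mul hθ hμ hf hf' z).norm.congr (ae_of_all _ fun s => ?_)
    simp only [norm_mul, Real.norm_of_nonneg (mehlerKernel_nonneg _ _ _)]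
  have hmehler (s : ℝ) (hs : 0 < s) (u v : ℝ) :=
    hasSum_mehler (abs_exp_neg_mul_lt_one (mul_pos hθ hs)) u v
  have hbound (s : ℝ) (hs : 0 < s) :=
    (((hmehler s hs x x).mul_right ‖f s‖).add ((hmehler s hs y y).mul_right ‖f s‖)).div_const 2
  simp_rw [hterm]
  refine hasSum_integral_of_dominated_convergence _
    (fun n => (by fun_prop : Continuous _).aestronglyMeasurable.mul hf.1)
    (fun n => ae_of_all _ fun s => ?_) (hμ.mono fun s hs => (hbound s hs).summable)
    ((((hdiag x).add (hdiag y)).div_const 2).congr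
      (hμ.mono fun s hs => (hbound s hs).tsum_eq.symm))
    (hμ.mono fun s hs => (hmehler s hs x y).mul_right (f s))
  rw [norm_mul, norm_mul, norm_pow, Real.norm_eq_abs (Real.exp _), Real.abs_exp, ← add_mul,
    ← mul_add, mul_div_right_comm, mul_div_assoc]
  gcongr
  exact abs_normHermite_mul_normHermite_le n x y

end Subordination

theorem stmt3_general {θ : ℝ} (hθ : 0 < θ) {μ : Measure ℝ} (hμ : ∀ᵐ s ∂μ, 0 < s) {f : ℝ → ℝ}
    (hf : Integrable f μ) (hf' : Integrable (fun s => s ^ (-(1 / 2) : ℝ) * f s) μ) (x y : ℝ) :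
    (Summable fun n : ℕ => |laplace μ f (θ * n) * normHermite n x * normHermite n y|) ∧
      ∫ s, ouKernel θ s x y * f s ∂μ =
        gauss x * ∑' n : ℕ, laplace μ f (θ * n) * normHermite n x * normHermite n y := by
  have hsum := hasSum_laplace_mul_normHermite hθ hμ hf hf' x y
  refine ⟨hsum.summable.abs, ?_⟩
  rw [hsum.tsum_eq, ← integral_const_mul]
  refine integral_congr_ae (hμ.mono fun s hs => ?_)
  simp only [ouKernel_eq_gauss_mul_mehlerKernel (mul_pos hθ hs), mul_assoc]

/-- **Spectral decomposition of the subordinated Ornstein–Uhlenbeck kernel.**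
Let `θ > 0`, let `f` be a probability density on `(0,∞)`, set
`𝔢(λ) = ∫₀^∞ e^{−λs} f(s) ds` and assume `sup_{λ ≥ 0} λ·𝔢(λ) < ∞`. Then for all
`x, y ∈ ℝ`, `∫₀^∞ p(s,x,y) f(s) ds = m(x) Σₙ 𝔢(θn) Qₙ(x) Qₙ(y)`, the series
converging absolutely. -/
theorem stmt3 (θ : ℝ) (hθ : 0 < θ)
    (f : ℝ → ℝ) (hfmeas : Measurable f) (hf0 : ∀ s, 0 ≤ f s)
    (hf1 : ∫ s in Set.Ioi (0:ℝ), f s = 1)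
    (hbd : ∃ C : ℝ, ∀ lam : ℝ, 0 ≤ lam →
      lam * ∫ s in Set.Ioi (0:ℝ), Real.exp (-lam * s) * f s ≤ C) :
    ∀ x y : ℝ,
      (Summable fun n : ℕ =>
        |(∫ s in Set.Ioi (0:ℝ), Real.exp (-(θ * n) * s) * f s) *
          normHermite n x * normHermite n y|) ∧
      ∫ s in Set.Ioi (0:ℝ), ouKernel θ s x y * f s
        = gauss x * ∑' n : ℕ,
            (∫ s in Set.Ioi (0:ℝ), Real.exp (-(θ * n) * s) * f s) *
              normHermite n x * normHermite n y := by
  have hpos : ∀ᵐ s ∂volume.restrict (Ioi (0 : ℝ)), 0 < s := ae_restrict_mem measurableSet_Ioi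
  have hf : IntegrableOn f (Ioi 0) := .of_integral_ne_zero (hf1 ▸ one_ne_zero)
  have hdecay := laplace_isBigO_rpow_neg_one (ae_of_all _ hf0) hbd
  exact stmt3_general hθ hpos hf <| integrable_rpow_neg_mul_of_laplace_isBigO hpos hf
    (ae_of_all _ hf0) hdecay one_half_pos one_half_lt_one
end

section
/- Let Φ : (0,∞) → (0,∞) be regularly varying at 0⁺ with index α ∈ (0,1), i.e. for every c > 0, lim_{z→0⁺} Φ(cz)/Φ(z) = c^α. Fix λ > 0 and let g : (0,∞) → [0,∞) be nonincreasing with ∫₀^∞ e^{−zt} g(t) dt = Φ(z)/(z(λ + Φ(z))) for all z > 0. Then g is regularly varying at infinity with index −α: for every c > 0, lim_{t→+∞} g(ct)/g(t) = c^{−α}. -/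
open MeasureTheory Set Filter

open scoped Topology Polynomial

/-!
Write `ω z` for `z` times the Laplace transform of `g` at `z`. The function
`u ↦ g (t * u) / ω t⁻¹` has Laplace transform `(ω (k * t⁻¹) / ω t⁻¹) / k` at `k`. If `ω` is
regularly varying at `0⁺` with index `α < 1`, this tends as `t → ∞` to `k ^ (α - 1)`, the transform
of `u ↦ u ^ (-α) / Γ(1 - α)`. By Weierstrass approximation in the variable `exp (-u)`, the functions
converge vaguely, and since they are antitone they converge pointwise; at `u = 1` this is Karamata's
Tauberian theorem `g t ∼ ω t⁻¹ / Γ(1 - α)`, which transfers the regular variation of `ω` to `g`.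

Here `ω = Φ / (lam + Φ)`. It is monotone because `g` is antitone, so `Φ` is monotone and has a limit
`L ≥ 0` at `0⁺`; hence `ω / Φ` tends to `(lam + L)⁻¹ ≠ 0`, and `ω` is regularly varying with `Φ`.
-/

/-- `f` is regularly varying along `l` with index `ρ`. For the filters `𝓝[>] 0` and `atTop` this is
regular variation at `0⁺` and at infinity. -/
def IsRegularlyVarying (f : ℝ → ℝ) (l : Filter ℝ) (ρ : ℝ) : Prop :=
  ∀ c : ℝ, 0 < c → Tendsto (fun t => f (c * t) / f t) l (𝓝 (c ^ ρ))

namespace IsRegularlyVarying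

variable {f h : ℝ → ℝ} {l : Filter ℝ} {κ ρ : ℝ}

-- For `c = 1` the quotient is `f t / f t`, which is `0` instead of `1` wherever `f t = 0`.
theorem eventually_ne_zero (hf : IsRegularlyVarying f l ρ) : ∀ᶠ t in l, f t ≠ 0 := by
  have h_one : Tendsto (fun t => f (1 * t) / f t) l (𝓝 1) := by simpa using hf 1 one_pos
  filter_upwards [h_one.eventually_ne one_ne_zero] with t ht hft
  simp [hft] at ht

theorem of_tendsto_div (hh : IsRegularlyVarying h l ρ)
    (hl : ∀ c : ℝ, 0 < c → Tendsto (c * ·) l l)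
    (hfh : Tendsto (fun t => f t / h t) l (𝓝 κ)) (hκ : κ ≠ 0) : IsRegularlyVarying f l ρ := by
  intro c hc
  have h_lim : Tendsto (fun t => f (c * t) / h (c * t) / (f t / h t) * (h (c * t) / h t)) l
      (𝓝 (κ / κ * c ^ ρ)) :=
    ((hfh.comp (hl c hc)).div hfh hκ).mul (hh c hc)
  rw [div_self hκ, one_mul] at h_lim
  refine h_lim.congr' ?_
  filter_upwards [hh.eventually_ne_zero, (hl c hc).eventually hh.eventually_ne_zero,
    hfh.eventually_ne hκ] with t ht hct hft
  have hft0 : f t ≠ 0 := fun h0 => hft (by simp [h0])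
  field_simp

theorem comp_inv (hf : IsRegularlyVarying f (𝓝[>] 0) ρ) :
    IsRegularlyVarying (fun t => f t⁻¹) atTop (-ρ) := by
  intro c hc
  have h_lim := (hf c⁻¹ (inv_pos.2 hc)).comp tendsto_inv_atTop_nhdsGT_zero
  rw [Real.inv_rpow hc.le, ← Real.rpow_neg hc.le] at h_lim
  simpa only [Function.comp_def, mul_inv] using h_lim

end IsRegularlyVarying

theorem tendsto_const_mul_nhdsGT_zero {c : ℝ} (hc : 0 < c) :
    Tendsto (c * ·) (𝓝[>] (0 : ℝ)) (𝓝[>] 0) := by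
  refine tendsto_nhdsWithin_iff.2 ⟨?_, ?_⟩
  · simpa using ((continuous_const_mul c).tendsto 0).mono_left nhdsWithin_le_nhds
  · filter_upwards [self_mem_nhdsWithin] with z hz using mul_pos hc hz

section Moments

variable {Ω ι : Type*} [MeasurableSpace Ω] {μ : Measure Ω} {X V : Ω → ℝ} {a b : ℝ} {f : ℝ → ℝ}

theorem integrable_comp_mul_of_mem_Icc (hX : AEMeasurable X μ) (hXab : ∀ᵐ ω ∂μ, X ω ∈ Icc a b)
    (hV : Integrable V μ) (hf : Continuous f) : Integrable (fun ω => f (X ω) * V ω) μ := by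
  obtain ⟨C, hC⟩ := isCompact_Icc.exists_bound_of_continuousOn hf.continuousOn
  refine hV.bdd_mul (c := C) (hf.measurable.comp_aemeasurable hX).aestronglyMeasurable ?_
  filter_upwards [hXab] with ω hω using hC _ hω

theorem integral_eval_mul_eq_sum (hX : AEMeasurable X μ) (hXab : ∀ᵐ ω ∂μ, X ω ∈ Icc a b)
    (hV : Integrable V μ) (p : ℝ[X]) :
    ∫ ω, p.eval (X ω) * V ω ∂μ =
      ∑ n ∈ Finset.range (p.natDegree + 1), p.coeff n * ∫ ω, X ω ^ n * V ω ∂μ := by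
  simp_rw [Polynomial.eval_eq_sum_range, Finset.sum_mul]
  rw [integral_finsetSum]
  · simp_rw [mul_assoc, integral_const_mul]
  · exact fun n _ =>
      integrable_comp_mul_of_mem_Icc hX hXab hV (f := fun x => p.coeff n * x ^ n) (by fun_prop)

theorem abs_integral_comp_mul_sub_le {h : ℝ → ℝ} {δ : ℝ} (hX : AEMeasurable X μ)
    (hXab : ∀ᵐ ω ∂μ, X ω ∈ Icc a b) (hV : Integrable V μ) (hV0 : ∀ᵐ ω ∂μ, 0 ≤ V ω)
    (hf : Continuous f) (hh : Continuous h) (hfh : ∀ x ∈ Icc a b, |f x - h x| ≤ δ) :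
    |∫ ω, f (X ω) * V ω ∂μ - ∫ ω, h (X ω) * V ω ∂μ| ≤ δ * ∫ ω, V ω ∂μ := by
  rw [← integral_sub (integrable_comp_mul_of_mem_Icc hX hXab hV hf)
    (integrable_comp_mul_of_mem_Icc hX hXab hV hh), ← integral_const_mul, ← Real.norm_eq_abs]
  refine norm_integral_le_of_norm_le (hV.const_mul δ) ?_
  filter_upwards [hXab, hV0] with ω hω hω0
  rw [← sub_mul, norm_mul, Real.norm_eq_abs, Real.norm_of_nonneg hω0]
  exact mul_le_mul_of_nonneg_right (hfh _ hω) hω0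

variable {l : Filter ι} {W : ι → Ω → ℝ}

theorem tendsto_integral_eval_mul_of_tendsto_moments (hX : AEMeasurable X μ)
    (hXab : ∀ᵐ ω ∂μ, X ω ∈ Icc a b) (hW : ∀ᶠ i in l, Integrable (W i) μ) (hV : Integrable V μ)
    (hmoments : ∀ n : ℕ,
      Tendsto (fun i => ∫ ω, X ω ^ n * W i ω ∂μ) l (𝓝 (∫ ω, X ω ^ n * V ω ∂μ))) (p : ℝ[X]) :
    Tendsto (fun i => ∫ ω, p.eval (X ω) * W i ω ∂μ) l (𝓝 (∫ ω, p.eval (X ω) * V ω ∂μ)) := by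
  rw [integral_eval_mul_eq_sum hX hXab hV]
  refine (tendsto_finsetSum _ fun n _ => (hmoments n).const_mul (p.coeff n)).congr' ?_
  filter_upwards [hW] with i hi using (integral_eval_mul_eq_sum hX hXab hi p).symm

theorem tendsto_integral_comp_mul_of_tendsto_moments (hX : AEMeasurable X μ)
    (hXab : ∀ᵐ ω ∂μ, X ω ∈ Icc a b) (hW : ∀ᶠ i in l, Integrable (W i) μ)
    (hW0 : ∀ᶠ i in l, ∀ᵐ ω ∂μ, 0 ≤ W i ω) (hV : Integrable V μ) (hV0 : ∀ᵐ ω ∂μ, 0 ≤ V ω)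
    (hmoments : ∀ n : ℕ,
      Tendsto (fun i => ∫ ω, X ω ^ n * W i ω ∂μ) l (𝓝 (∫ ω, X ω ^ n * V ω ∂μ)))
    (hf : Continuous f) :
    Tendsto (fun i => ∫ ω, f (X ω) * W i ω ∂μ) l (𝓝 (∫ ω, f (X ω) * V ω ∂μ)) := by
  set M := ∫ ω, V ω ∂μ
  have hM0 : 0 ≤ M := integral_nonneg_of_ae hV0
  have hmass : Tendsto (fun i => ∫ ω, W i ω ∂μ) l (𝓝 M) := by simpa using hmoments 0
  rw [Metric.tendsto_nhds]
  intro ε hε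
  set δ := ε / (3 * (M + 1)) with hδ
  have hδ0 : 0 < δ := by positivity
  have hδM : δ * (M + 1) = ε / 3 := by rw [hδ]; field_simp
  obtain ⟨p, hp⟩ := exists_polynomial_near_of_continuousOn a b f hf.continuousOn δ hδ0
  have hpoly := tendsto_integral_eval_mul_of_tendsto_moments hX hXab hW hV hmoments p
  filter_upwards [hW, hW0, hmass.eventually_lt_const (lt_add_one M),
    Metric.tendsto_nhds.1 hpoly (ε / 3) (by positivity)] with i hi hi0 hmass_i hpoly_i
  have hclose_W : |∫ ω, p.eval (X ω) * W i ω ∂μ - ∫ ω, f (X ω) * W i ω ∂μ| < ε / 3 :=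
    (abs_integral_comp_mul_sub_le hX hXab hi hi0 p.continuous hf
      fun x hx => (hp x hx).le).trans_lt (hδM ▸ mul_lt_mul_of_pos_left hmass_i hδ0)
  have hclose_V : |∫ ω, p.eval (X ω) * V ω ∂μ - ∫ ω, f (X ω) * V ω ∂μ| < ε / 3 :=
    (abs_integral_comp_mul_sub_le hX hXab hV hV0 p.continuous hf
      fun x hx => (hp x hx).le).trans_lt (hδM ▸ mul_lt_mul_of_pos_left (lt_add_one M) hδ0)
  rw [Real.dist_eq] at hpoly_i ⊢
  rw [abs_lt] at hclose_W hclose_V hpoly_i ⊢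
  constructor <;> linarith

end Moments

section VagueConvergence

theorem const_le_setIntegral_mul {E : Type*} [TopologicalSpace E] [T2Space E] [MeasurableSpace E]
    [OpensMeasurableSpace E] {μ : Measure E} [IsFiniteMeasureOnCompacts μ] {φ V : E → ℝ}
    {K s : Set E} {m : ℝ} (hK : IsCompact K) (hKs : K ⊆ s) (hφ : Continuous φ) (hφ0 : ∀ u, 0 ≤ φ u)
    (hφK : tsupport φ ⊆ K) (hφ1 : ∫ u, φ u ∂μ = 1) (hV : IntegrableOn V K μ)
    (hm : ∀ u ∈ K, m ≤ V u) : m ≤ ∫ u in s, φ u * V u ∂μ := by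
  have h_restrict : ∀ {t : Set E} {W : E → ℝ}, K ⊆ t →
      ∫ u in t, φ u * W u ∂μ = ∫ u, φ u * W u ∂μ := fun hKt =>
    setIntegral_eq_integral_of_forall_compl_eq_zero fun u hu => by
      rw [image_eq_zero_of_notMem_tsupport (notMem_subset (hφK.trans hKt) hu), zero_mul]
  calc m = ∫ u, φ u * m ∂μ := by rw [integral_mul_const, hφ1, one_mul]
    _ = ∫ u in K, φ u * m ∂μ := (h_restrict (W := fun _ => m) subset_rfl).symm
    _ ≤ ∫ u in K, φ u * V u ∂μ :=
        setIntegral_mono_on ((hφ.mul continuous_const).continuousOn.integrableOn_compact hK)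
          (hV.continuousOn_mul hφ.continuousOn hK) hK.measurableSet
          fun u hu => mul_le_mul_of_nonneg_left (hm u hu) (hφ0 u)
    _ = ∫ u in s, φ u * V u ∂μ := by rw [h_restrict subset_rfl, h_restrict hKs]

variable {ι : Type*} {l : Filter ι} {G : ι → ℝ → ℝ} {F : ℝ → ℝ} {s : Set ℝ}

/-- Vague convergence on `s` of the densities `G i` to the density `F`: convergence of the integrals
against all continuous functions with compact support contained in `s`. -/
def TendstoVaguelyOn (G : ι → ℝ → ℝ) (F : ℝ → ℝ) (l : Filter ι) (s : Set ℝ) : Prop :=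
  ∀ φ : ℝ → ℝ, Continuous φ → HasCompactSupport φ → tsupport φ ⊆ s →
    Tendsto (fun i => ∫ u in s, φ u * G i u) l (𝓝 (∫ u in s, φ u * F u))

theorem TendstoVaguelyOn.neg (hGF : TendstoVaguelyOn G F l s) :
    TendstoVaguelyOn (fun i u => -G i u) (fun u => -F u) l s := by
  intro φ hφ hφc hφs
  simpa only [mul_neg, integral_neg] using (hGF φ hφ hφc hφs).neg

theorem exists_continuous_integral_eq_one_tsupport_subset_Icc {a b : ℝ} (hab : a < b) :
    ∃ φ : ℝ → ℝ, Continuous φ ∧ (∀ u, 0 ≤ φ u) ∧ tsupport φ ⊆ Icc a b ∧ ∫ u, φ u = 1 := by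
  let ψ : ContDiffBump ((a + b) / 2) := ⟨(b - a) / 4, (b - a) / 2, by linarith, by linarith⟩
  refine ⟨ψ.normed volume, ψ.continuous_normed, ψ.nonneg_normed, ?_, ψ.integral_normed⟩
  rw [ψ.tsupport_normed_eq, Real.Icc_eq_closedBall]

theorem TendstoVaguelyOn.eventually_lt_of_forall_Icc_le (hGF : TendstoVaguelyOn G F l s)
    {a b r : ℝ} (hab : a < b) (hs : Icc a b ⊆ s) {y : ι → ℝ} (hF : ContinuousOn F (Icc a b))
    (hrF : ∀ u ∈ Icc a b, r < F u) (hG : ∀ᶠ i in l, IntegrableOn (G i) (Icc a b))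
    (hGy : ∀ᶠ i in l, ∀ u ∈ Icc a b, G i u ≤ y i) : ∀ᶠ i in l, r < y i := by
  obtain ⟨φ, hφ, hφ0, hφs, hφ1⟩ := exists_continuous_integral_eq_one_tsupport_subset_Icc hab
  obtain ⟨v, hv, hFv⟩ := isCompact_Icc.exists_isMinOn (nonempty_Icc.2 hab.le) hF
  have hr : r < ∫ u in s, φ u * F u :=
    (hrF v hv).trans_le <| const_le_setIntegral_mul isCompact_Icc hs hφ hφ0 hφs hφ1
      (hF.integrableOn_compact isCompact_Icc) hFv
  have h_lim := hGF φ hφ (isCompact_Icc.of_isClosed_subset (isClosed_tsupport φ) hφs)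
    (hφs.trans hs)
  filter_upwards [h_lim.eventually_const_lt hr, hG, hGy] with i hri hGi hyi
  have hy : -y i ≤ ∫ u in s, φ u * -G i u :=
    const_le_setIntegral_mul isCompact_Icc hs hφ hφ0 hφs hφ1 hGi.neg
      fun u hu => neg_le_neg (hyi u hu)
  simp only [mul_neg, integral_neg] at hy
  linarith

theorem TendstoVaguelyOn.tendsto_of_antitoneOn (hGF : TendstoVaguelyOn G F l s) {x : ℝ}
    (hs : s ∈ 𝓝 x) (hG : ∀ᶠ i in l, AntitoneOn (G i) s) (hF : ContinuousOn F s) :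
    Tendsto (fun i => G i x) l (𝓝 (F x)) := by
  have hFx : Tendsto F (𝓝 x) (𝓝 (F x)) := hF.continuousAt hs
  have hG_int : ∀ {a b : ℝ}, Icc a b ⊆ s → ∀ᶠ i in l, IntegrableOn (G i) (Icc a b) := fun hab =>
    hG.mono fun i hi => (hi.mono hab).integrableOn_isCompact isCompact_Icc
  refine tendsto_order.2 ⟨fun r hr => ?_, fun r hr => ?_⟩
  · obtain ⟨b, hxb, hb⟩ := mem_nhdsGE_iff_exists_Icc_subset.1 <|
      mem_nhdsWithin_of_mem_nhds <| inter_mem hs (hFx.eventually_const_lt hr)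
    have hbs : Icc x b ⊆ s := hb.trans inter_subset_left
    exact hGF.eventually_lt_of_forall_Icc_le hxb hbs (hF.mono hbs) (fun u hu => (hb hu).2)
      (hG_int hbs) (hG.mono fun i hi u hu => hi (mem_of_mem_nhds hs) (hbs hu) hu.1)
  · obtain ⟨a, hax, ha⟩ := mem_nhdsLE_iff_exists_Icc_subset.1 <|
      mem_nhdsWithin_of_mem_nhds <| inter_mem hs (hFx.eventually_lt_const hr)
    have has : Icc a x ⊆ s := ha.trans inter_subset_left
    have h_neg := hGF.neg.eventually_lt_of_forall_Icc_le (r := -r) (y := fun i => -G i x) hax has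
      (hF.mono has).neg (fun u hu => neg_lt_neg (ha hu).2) ((hG_int has).mono fun i hi => hi.neg)
      (hG.mono fun i hi u hu => neg_le_neg (hi (has hu) (mem_of_mem_nhds hs) hu.2))
    exact h_neg.mono fun i hi => neg_lt_neg_iff.1 hi

end VagueConvergence

section Laplace

variable {g : ℝ → ℝ} {t z : ℝ}

/-- Absolute convergence at `z` of the integral defining `laplaceTransform g z`. -/
def LaplaceConvergent (g : ℝ → ℝ) (z : ℝ) : Prop :=
  IntegrableOn (fun t => Real.exp (-z * t) * g t) (Ioi 0)

/-- The Laplace transform of the restriction of `g` to the positive half-line, at a real argument;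
it has the junk value `0` where the integral does not converge absolutely. -/
noncomputable def laplaceTransform (g : ℝ → ℝ) (z : ℝ) : ℝ :=
  ∫ t in Ioi (0 : ℝ), Real.exp (-z * t) * g t

theorem laplaceConvergent_of_laplaceTransform_ne_zero (h : laplaceTransform g z ≠ 0) :
    LaplaceConvergent g z :=
  Integrable.of_integral_ne_zero h

theorem laplaceTransform_nonneg (hg : ∀ t, 0 < t → 0 ≤ g t) : 0 ≤ laplaceTransform g z :=
  setIntegral_nonneg measurableSet_Ioi fun t ht => mul_nonneg (Real.exp_pos _).le (hg t ht)

theorem laplaceTransform_div_const (a : ℝ) :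
    laplaceTransform (fun u => g u / a) z = laplaceTransform g z / a := by
  simp only [laplaceTransform, ← mul_div_assoc, integral_div]

theorem LaplaceConvergent.div_const (hg : LaplaceConvergent g z) (a : ℝ) :
    LaplaceConvergent (fun u => g u / a) z := by
  simpa only [LaplaceConvergent, IntegrableOn, ← mul_div_assoc] using Integrable.div_const hg a

theorem exp_mul_comp_mul_left (ht : t ≠ 0) (u : ℝ) :
    Real.exp (-z * u) * g (t * u) = Real.exp (-(z / t) * (t * u)) * g (t * u) := by
  congr 2
  field_simp

theorem laplaceConvergent_comp_mul_left (ht : 0 < t) :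
    LaplaceConvergent (fun u => g (t * u)) z ↔ LaplaceConvergent g (z / t) := by
  simp only [LaplaceConvergent, exp_mul_comp_mul_left ht.ne']
  simpa using integrableOn_Ioi_comp_mul_left_iff (fun s => Real.exp (-(z / t) * s) * g s) 0 ht

theorem laplaceTransform_comp_mul_left (ht : 0 < t) :
    laplaceTransform (fun u => g (t * u)) z = t⁻¹ * laplaceTransform g (z / t) := by
  simp only [laplaceTransform, exp_mul_comp_mul_left ht.ne']
  simpa using integral_comp_mul_left_Ioi (fun s => Real.exp (-(z / t) * s) * g s) 0 ht

theorem laplaceTransform_rpow {ρ : ℝ} (hρ : -1 < ρ) (hz : 0 < z) :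
    laplaceTransform (fun u => u ^ ρ) z = Real.Gamma (ρ + 1) / z ^ (ρ + 1) := by
  have h := Real.integral_rpow_mul_exp_neg_mul_Ioi (a := ρ + 1) (by linarith) hz
  rw [add_sub_cancel_right, one_div, Real.inv_rpow hz.le, inv_mul_eq_div] at h
  simpa only [laplaceTransform, neg_mul, mul_comm (Real.exp _)] using h

-- After rescaling, `z * laplaceTransform g z` is the transform of `u ↦ g (z⁻¹ * u)` at `1`.
theorem monotoneOn_mul_laplaceTransform (hg : AntitoneOn g (Ioi 0))
    (hconv : ∀ z, 0 < z → LaplaceConvergent g z) :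
    MonotoneOn (fun z => z * laplaceTransform g z) (Ioi 0) := by
  intro x (hx : 0 < x) y (hy : 0 < y) hxy
  have h_scale : ∀ {z : ℝ}, 0 < z → LaplaceConvergent (fun u => g (z⁻¹ * u)) 1 ∧
      z * laplaceTransform g z = laplaceTransform (fun u => g (z⁻¹ * u)) 1 := by
    intro z hz
    rw [laplaceConvergent_comp_mul_left (inv_pos.2 hz),
      laplaceTransform_comp_mul_left (inv_pos.2 hz), inv_inv, one_div, inv_inv]
    exact ⟨hconv z hz, rfl⟩
  simp only [(h_scale hx).2, (h_scale hy).2]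
  refine setIntegral_mono_on (h_scale hx).1 (h_scale hy).1 measurableSet_Ioi
    fun u (hu : 0 < u) => mul_le_mul_of_nonneg_left ?_ (Real.exp_pos _).le
  exact hg (mul_pos (inv_pos.2 hy) hu) (mul_pos (inv_pos.2 hx) hu) (by gcongr)

theorem continuous_comp_neg_log_div {φ : ℝ → ℝ} (hφ : Continuous φ) (hφc : HasCompactSupport φ) :
    Continuous fun x => φ (-Real.log x) / x := by
  rw [continuous_iff_continuousAt]
  intro x
  rcases eq_or_ne x 0 with rfl | hx
  · have h_atTop : Tendsto (fun x => -Real.log x) (𝓝[≠] 0) atTop :=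
      tendsto_neg_atBot_atTop.comp Real.tendsto_log_nhdsNE_zero
    have hφ_zero : φ =ᶠ[atTop] 0 :=
      (hasCompactSupport_iff_eventuallyEq.1 hφc).filter_mono <|
        coclosedCompact_eq_cocompact (X := ℝ) ▸ atTop_le_cocompact
    have h_zero : ∀ᶠ x in 𝓝[≠] (0 : ℝ), φ (-Real.log x) / x = 0 := by
      filter_upwards [h_atTop.eventually hφ_zero] with x hx
      rw [hx, Pi.zero_apply, zero_div]
    rw [continuousAt_iff_punctured_nhds]
    simpa using tendsto_nhds_of_eventually_eq h_zero
  · exact ((hφ.continuousAt.comp (Real.continuousAt_log hx).neg)).div continuousAt_id hx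

-- In the variable `X u = exp (-u)`, which ranges over `[0, 1]`, the transform at `n + 1` is the
-- `n`-th moment of the density `exp (-u) * G i u`.
theorem tendstoVaguelyOn_of_tendsto_laplaceTransform {ι : Type*} {l : Filter ι} {G : ι → ℝ → ℝ}
    {F : ℝ → ℝ} (hG : ∀ᶠ i in l, LaplaceConvergent (G i) 1)
    (hG0 : ∀ᶠ i in l, ∀ u, 0 < u → 0 ≤ G i u) (hF : LaplaceConvergent F 1)
    (hF0 : ∀ u, 0 < u → 0 ≤ F u)
    (hGF : ∀ n : ℕ,
      Tendsto (fun i => laplaceTransform (G i) (n + 1)) l (𝓝 (laplaceTransform F (n + 1)))) :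
    TendstoVaguelyOn G F l (Ioi 0) := by
  intro φ hφ hφc _
  have h_moment : ∀ (n : ℕ) (V : ℝ → ℝ), laplaceTransform V (n + 1) =
      ∫ u in Ioi (0 : ℝ), Real.exp (-u) ^ n * (Real.exp (-1 * u) * V u) := by
    intro n V
    refine integral_congr_ae (ae_of_all _ fun u => ?_)
    simp only [← Real.exp_nat_mul, ← mul_assoc, ← Real.exp_add]
    ring_nf
  have h_test : ∀ u v : ℝ,
      φ (-Real.log (Real.exp (-u))) / Real.exp (-u) * (Real.exp (-1 * u) * v) = φ u * v := by
    intro u v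
    rw [Real.log_exp, neg_neg, neg_one_mul]
    field_simp
  have h_nonneg : ∀ V : ℝ → ℝ, (∀ u, 0 < u → 0 ≤ V u) →
      ∀ᵐ u ∂volume.restrict (Ioi (0 : ℝ)), 0 ≤ Real.exp (-1 * u) * V u := fun V hV =>
    ae_restrict_of_forall_mem measurableSet_Ioi fun u hu =>
      mul_nonneg (Real.exp_pos _).le (hV u hu)
  have h_mem : ∀ᵐ u ∂volume.restrict (Ioi (0 : ℝ)), Real.exp (-u) ∈ Icc (0 : ℝ) 1 :=
    ae_restrict_of_forall_mem measurableSet_Ioi fun u (hu : 0 < u) =>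
      ⟨(Real.exp_pos _).le, Real.exp_le_one_iff.2 (neg_nonpos.2 hu.le)⟩
  have h_lim := tendsto_integral_comp_mul_of_tendsto_moments (X := fun u => Real.exp (-u))
    (by fun_prop) h_mem hG (hG0.mono fun i => h_nonneg (G i)) hF (h_nonneg F hF0)
    (by simpa only [h_moment] using hGF) (continuous_comp_neg_log_div hφ hφc)
  simpa only [h_test] using h_lim

end Laplace

section Tauberian

variable {g : ℝ → ℝ} {α : ℝ}

theorem laplaceTransform_rpow_neg_div_Gamma {z : ℝ} (hα : α < 1) (hz : 0 < z) :
    laplaceTransform (fun u => u ^ (-α) / Real.Gamma (1 - α)) z = z ^ α / z := by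
  have hΓ : Real.Gamma (1 - α) ≠ 0 := (Real.Gamma_pos_of_pos (sub_pos.2 hα)).ne'
  rw [laplaceTransform_div_const, laplaceTransform_rpow (by linarith) hz, neg_add_eq_sub,
    Real.rpow_sub hz, Real.rpow_one]
  field_simp

/-- The function `g` with its argument stretched by `t`, normalized so that its Laplace transform
is `1` at `1`. The Tauberian theorem is about its limit as `t` tends to infinity. -/
noncomputable def laplaceRescaling (g : ℝ → ℝ) (t u : ℝ) : ℝ :=
  g (t * u) / (t⁻¹ * laplaceTransform g t⁻¹)

theorem inv_mul_laplaceTransform_inv_nonneg {t : ℝ} (hg0 : ∀ t, 0 < t → 0 ≤ g t) (ht : 0 < t) :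
    0 ≤ t⁻¹ * laplaceTransform g t⁻¹ :=
  mul_nonneg (inv_pos.2 ht).le (laplaceTransform_nonneg hg0)

theorem laplaceRescaling_nonneg {t u : ℝ} (hg0 : ∀ t, 0 < t → 0 ≤ g t) (ht : 0 < t) (hu : 0 < u) :
    0 ≤ laplaceRescaling g t u :=
  div_nonneg (hg0 _ (mul_pos ht hu)) (inv_mul_laplaceTransform_inv_nonneg hg0 ht)

theorem antitoneOn_laplaceRescaling {t : ℝ} (hg0 : ∀ t, 0 < t → 0 ≤ g t)
    (hg : AntitoneOn g (Ioi 0)) (ht : 0 < t) : AntitoneOn (laplaceRescaling g t) (Ioi 0) :=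
  fun _ hu _ hv huv => div_le_div_of_nonneg_right
    (hg (mul_pos ht hu) (mul_pos ht hv) (mul_le_mul_of_nonneg_left huv ht.le))
    (inv_mul_laplaceTransform_inv_nonneg hg0 ht)

theorem eventually_laplaceConvergent_laplaceRescaling
    (hlap : IsRegularlyVarying (fun z => z * laplaceTransform g z) (𝓝[>] 0) α) :
    ∀ᶠ t in atTop, LaplaceConvergent (laplaceRescaling g t) 1 := by
  filter_upwards [tendsto_inv_atTop_nhdsGT_zero.eventually hlap.eventually_ne_zero,
    eventually_gt_atTop 0] with t hlap_t ht
  refine ((laplaceConvergent_comp_mul_left ht).2 ?_).div_const _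
  rw [one_div]
  exact laplaceConvergent_of_laplaceTransform_ne_zero (right_ne_zero_of_mul hlap_t)

theorem tendsto_laplaceTransform_laplaceRescaling {z : ℝ} (hz : 0 < z)
    (hlap : IsRegularlyVarying (fun z => z * laplaceTransform g z) (𝓝[>] 0) α) :
    Tendsto (fun t => laplaceTransform (laplaceRescaling g t) z) atTop (𝓝 (z ^ α / z)) := by
  refine (((hlap z hz).comp tendsto_inv_atTop_nhdsGT_zero).div_const z).congr' ?_
  filter_upwards [eventually_gt_atTop 0] with t ht
  unfold laplaceRescaling
  rw [laplaceTransform_div_const, laplaceTransform_comp_mul_left ht]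
  simp only [Function.comp_apply, ← div_eq_mul_inv]
  field_simp

theorem tendsto_div_mul_laplaceTransform_inv (hα : α < 1) (hg0 : ∀ t, 0 < t → 0 ≤ g t)
    (hg : AntitoneOn g (Ioi 0))
    (hlap : IsRegularlyVarying (fun z => z * laplaceTransform g z) (𝓝[>] 0) α) :
    Tendsto (fun t => g t / (t⁻¹ * laplaceTransform g t⁻¹)) atTop
      (𝓝 (Real.Gamma (1 - α))⁻¹) := by
  set F : ℝ → ℝ := fun u => u ^ (-α) / Real.Gamma (1 - α)
  have hF0 : ∀ u, 0 < u → 0 ≤ F u := fun u hu =>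
    div_nonneg (Real.rpow_nonneg hu.le _) (Real.Gamma_pos_of_pos (sub_pos.2 hα)).le
  have hF_lap : ∀ z, 0 < z → laplaceTransform F z = z ^ α / z := fun z =>
    laplaceTransform_rpow_neg_div_Gamma hα
  have hF_conv : LaplaceConvergent F 1 :=
    laplaceConvergent_of_laplaceTransform_ne_zero (by simp [hF_lap 1 one_pos])
  have hF_cont : ContinuousOn F (Ioi 0) :=
    (continuousOn_id.rpow_const fun u hu => Or.inl (ne_of_gt hu)).div_const _
  have h_vague : TendstoVaguelyOn (laplaceRescaling g) F atTop (Ioi 0) := by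
    refine tendstoVaguelyOn_of_tendsto_laplaceTransform
      (eventually_laplaceConvergent_laplaceRescaling hlap)
      ((eventually_gt_atTop 0).mono fun t ht u hu => laplaceRescaling_nonneg hg0 ht hu)
      hF_conv hF0 fun n => ?_
    rw [hF_lap _ n.cast_add_one_pos]
    exact tendsto_laplaceTransform_laplaceRescaling n.cast_add_one_pos hlap
  have h_one := h_vague.tendsto_of_antitoneOn (Ioi_mem_nhds one_pos)
    ((eventually_gt_atTop 0).mono fun t => antitoneOn_laplaceRescaling hg0 hg) hF_cont
  simpa only [laplaceRescaling, F, mul_one, Real.one_rpow, one_div] using h_one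

theorem isRegularlyVarying_atTop_of_mul_laplaceTransform (hα : α < 1)
    (hg0 : ∀ t, 0 < t → 0 ≤ g t) (hg : AntitoneOn g (Ioi 0))
    (hlap : IsRegularlyVarying (fun z => z * laplaceTransform g z) (𝓝[>] 0) α) :
    IsRegularlyVarying g atTop (-α) :=
  hlap.comp_inv.of_tendsto_div (fun _ hc => tendsto_id.const_mul_atTop hc)
    (tendsto_div_mul_laplaceTransform_inv hα hg0 hg hlap)
    (inv_ne_zero (Real.Gamma_pos_of_pos (sub_pos.2 hα)).ne')

end Tauberian

theorem exists_nonneg_tendsto_nhdsGT_of_monotoneOn {f : ℝ → ℝ} {a : ℝ}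
    (hf0 : ∀ z ∈ Ioi a, 0 ≤ f z) (hf : MonotoneOn f (Ioi a)) :
    ∃ L, 0 ≤ L ∧ Tendsto f (𝓝[>] a) (𝓝 L) := by
  have h_image : ∀ y ∈ f '' Ioi a, 0 ≤ y := forall_mem_image.2 hf0
  exact ⟨_, Real.sInf_nonneg h_image, hf.tendsto_nhdsGT ⟨0, h_image⟩⟩

theorem monotoneOn_of_div_const_add {E : Type*} [Preorder E] {Φ : E → ℝ} {s : Set E} {lam : ℝ}
    (hlam : 0 < lam) (hΦ0 : ∀ z ∈ s, 0 ≤ Φ z)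
    (hΦ : MonotoneOn (fun z => Φ z / (lam + Φ z)) s) : MonotoneOn Φ s := by
  intro x hx y hy hxy
  have h := hΦ hx hy hxy
  rw [div_le_div_iff₀ (add_pos_of_pos_of_nonneg hlam (hΦ0 x hx))
    (add_pos_of_pos_of_nonneg hlam (hΦ0 y hy))] at h
  exact le_of_mul_le_mul_left (by linarith) hlam

theorem stmt7_general {Φ : ℝ → ℝ} {α : ℝ} (hα : α < 1) (hΦ0 : ∀ z : ℝ, 0 < z → 0 < Φ z)
    (hΦ : IsRegularlyVarying Φ (𝓝[>] 0) α) {lam : ℝ} (hlam : 0 < lam) {g : ℝ → ℝ}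
    (hg0 : ∀ t : ℝ, 0 < t → 0 ≤ g t) (hg : AntitoneOn g (Ioi 0))
    (hlap : ∀ z : ℝ, 0 < z → laplaceTransform g z = Φ z / (z * (lam + Φ z))) :
    IsRegularlyVarying g atTop (-α) := by
  have hden : ∀ z, 0 < z → 0 < lam + Φ z := fun z hz => add_pos hlam (hΦ0 z hz)
  have hconv : ∀ z, 0 < z → LaplaceConvergent g z := fun z hz =>
    laplaceConvergent_of_laplaceTransform_ne_zero <| by
      rw [hlap z hz]
      exact (div_pos (hΦ0 z hz) (mul_pos hz (hden z hz))).ne'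
  have hω : EqOn (fun z => z * laplaceTransform g z) (fun z => Φ z / (lam + Φ z)) (Ioi 0) := by
    intro z (hz : 0 < z)
    simp only [hlap z hz]
    field_simp
  have hΦ_nonneg : ∀ z ∈ Ioi 0, 0 ≤ Φ z := fun z hz => (hΦ0 z hz).le
  have hΦ_mono : MonotoneOn Φ (Ioi 0) := monotoneOn_of_div_const_add hlam hΦ_nonneg <|
    (monotoneOn_mul_laplaceTransform hg hconv).congr hω
  obtain ⟨L, hL0, hL⟩ := exists_nonneg_tendsto_nhdsGT_of_monotoneOn hΦ_nonneg hΦ_mono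
  have h_ratio : Tendsto (fun z => z * laplaceTransform g z / Φ z) (𝓝[>] 0) (𝓝 (lam + L)⁻¹) := by
    refine ((hL.const_add lam).inv₀ (by positivity)).congr' ?_
    filter_upwards [self_mem_nhdsWithin] with z hz
    have hωz : z * laplaceTransform g z = Φ z / (lam + Φ z) := hω hz
    rw [hωz, div_div_cancel_left' (hΦ0 z hz).ne']
  exact isRegularlyVarying_atTop_of_mul_laplaceTransform hα hg0 hg <|
    hΦ.of_tendsto_div (fun _ => tendsto_const_mul_nhdsGT_zero) h_ratio (by positivity)

/-- **Regular variation of the relaxation function.**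
Let `Φ : (0,∞) → (0,∞)` be regularly varying at `0⁺` with index `α ∈ (0,1)`. Fix
`λ > 0` and let `g : (0,∞) → [0,∞)` be nonincreasing with Laplace transform
`∫₀^∞ e^{−zt} g(t) dt = Φ(z)/(z(λ + Φ(z)))` for all `z > 0`. Then `g` is regularly
varying at infinity with index `−α`. -/
theorem stmt7 (Φ : ℝ → ℝ) (α : ℝ) (hα : α ∈ Set.Ioo (0:ℝ) 1)
    (hΦpos : ∀ z : ℝ, 0 < z → 0 < Φ z)
    (hΦrv : ∀ c : ℝ, 0 < c →
      Tendsto (fun z => Φ (c * z) / Φ z) (nhdsWithin 0 (Set.Ioi 0))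
        (nhds (c ^ α)))
    (lam : ℝ) (hlam : 0 < lam)
    (g : ℝ → ℝ) (hg0 : ∀ t : ℝ, 0 < t → 0 ≤ g t)
    (hgmono : AntitoneOn g (Set.Ioi 0))
    (hglap : ∀ z : ℝ, 0 < z →
      ∫ t in Set.Ioi (0:ℝ), Real.exp (-z * t) * g t = Φ z / (z * (lam + Φ z))) :
    ∀ c : ℝ, 0 < c →
      Tendsto (fun t => g (c * t) / g t) atTop (nhds (c ^ (-α))) :=
  stmt7_general hα.2 hΦpos hΦrv hlam hg0 hgmono hglap
end
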